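/- arXiv:2505.06174 — 4 statements merged into one kernel-verified Lean document; each statement's English description precedes it below -/
import Mathlib

section
/- For any δ > 0 and any 0 < ρ < 1, every regular coding scheme Enc : F^k × F^σ → F^n, Dec : F^n → F^k ∪ {⊥} over a finite field F with q elements that is a strong (0,δ)-AMD code is also a strong (ρ, q^{ρn}·δ)-AMD code. -/
open scoped Classical BigOperators

/-- Probability of an event `E` under a finitely supported probability mass function `p`. -/
noncomputable def pr {Ω : Type*} [Fintype Ω] (p : Ω → ℝ) (E : Ω → Prop) : ℝ :=
  ∑ ω : Ω, if E ω then p ω else 0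

/-- Min-entropy `H∞(X) = -log₂ max_x Pr[X = x]`. -/
noncomputable def minEntropy {Ω α : Type*} [Fintype Ω] [Fintype α]
    (p : Ω → ℝ) (X : Ω → α) : ℝ :=
  - Real.logb 2 (⨆ x : α, pr p (fun ω => X ω = x))

/-- Conditional (average) min-entropy
`H̃∞(X|Z) = -log₂ Σ_z Pr[Z=z] · max_x Pr[X=x | Z=z] = -log₂ Σ_z max_x Pr[X=x ∧ Z=z]`. -/
noncomputable def condMinEntropy {Ω α β : Type*} [Fintype Ω] [Fintype α] [Fintype β]
    (p : Ω → ℝ) (X : Ω → α) (Z : Ω → β) : ℝ :=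
  - Real.logb 2 (∑ z : β, ⨆ x : α, pr p (fun ω => X ω = x ∧ Z ω = z))

/-- `(Enc, Dec)` (with message type `Msg`, randomness type `Rnd`, codeword type `C`,
codeword length `n` over an alphabet of size `q`) is a strong `(ρ, δ)`-AMD code:
for every message `m`, every probability space, every uniform randomness `R`, every
leakage `Z` (jointly distributed with `R`) satisfying
`H̃∞(Enc(m,R) | Z) ≥ H∞(Enc(m,R)) − ρ·n·log₂ q`, and every randomized adversary
`A` whose internal random seed `W` is independent of `(R, Z)`,
`Pr[Dec(Enc(m,R) + A(Z)) ∉ {m, ⊥}] ≤ δ`. -/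
def IsStrongAMD {Msg Rnd C : Type*} [Fintype Rnd] [Fintype C] [Add C]
    (Enc : Msg × Rnd → C) (Dec : C → Option Msg) (n q : ℕ) (ρ δ : ℝ) : Prop :=
  ∀ (m : Msg) (Ω : Type) [Fintype Ω] (p : Ω → ℝ),
    (∀ ω, 0 ≤ p ω) → (∑ ω : Ω, p ω) = 1 →
    ∀ (R : Ω → Rnd),
      (∀ r : Rnd, pr p (fun ω => R ω = r) = 1 / (Fintype.card Rnd : ℝ)) →
      ∀ (ZS : Type) [Fintype ZS] (Z : Ω → ZS) (T : Type) [Fintype T] (W : Ω → T),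
        (∀ (r : Rnd) (z : ZS) (w : T),
          pr p (fun ω => (R ω = r ∧ Z ω = z) ∧ W ω = w)
            = pr p (fun ω => R ω = r ∧ Z ω = z) * pr p (fun ω => W ω = w)) →
        condMinEntropy p (fun ω => Enc (m, R ω)) Z
          ≥ minEntropy p (fun ω => Enc (m, R ω)) - ρ * n * Real.logb 2 q →
        ∀ (A : ZS → T → C),
          pr p (fun ω => Dec (Enc (m, R ω) + A (Z ω) (W ω))
              ∉ ({some m, none} : Set (Option Msg))) ≤ δ

/-!
An adversary who sees the leakage and its own seed picks an offset, so that it wins exactly when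
the randomness `R` lands in a bad set determined by what it sees. Each bad set has at most
`δ·|Rnd|` elements, and each element is hit with probability at most the best guess of `R`.
Summing over the adversary's view bounds its success by `δ·|Rnd|` times the probability of guessing
`R` from the view. The independent seed does not help guessing, and an injective encoding preserves
guessing probabilities, so the entropy hypothesis bounds the guessing probability
by `q^{ρn} / |Rnd|`.
-/

section Probability

variable {Ω α β : Type*} [Fintype Ω] {p : Ω → ℝ}

theorem pr_nonneg (hp : ∀ ω, 0 ≤ p ω) (E : Ω → Prop) : 0 ≤ pr p E :=
  Finset.sum_nonneg fun ω _ => ite_nonneg (hp ω) le_rfl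

theorem pr_eq_zero_of_forall_not {E : Ω → Prop} (hE : ∀ ω, ¬E ω) : pr p E = 0 :=
  Finset.sum_eq_zero fun ω _ => if_neg (hE ω)

theorem pr_comp_eq_sum [Fintype α] (p : Ω → ℝ) (X : Ω → α) (E : α → Prop) [DecidablePred E] :
    pr p (fun ω => E (X ω)) = ∑ x with E x, pr p (fun ω => X ω = x) := by
  unfold pr
  rw [Finset.sum_comm]
  simp only [Finset.sum_ite_eq, Finset.mem_filter, Finset.mem_univ, true_and]
  -- only the decidability instances of the two conditionals differ
  congr!

theorem sum_pr_eq [Fintype α] (p : Ω → ℝ) (X : Ω → α) :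
    ∑ x, pr p (fun ω => X ω = x) = ∑ ω, p ω := by
  simpa only [pr, if_true, Finset.filter_true] using (pr_comp_eq_sum p X fun _ => True).symm

theorem pr_eq_and_le_iSup [Finite α] (p : Ω → ℝ) (X : Ω → α) (E : Ω → Prop) (x : α) :
    pr p (fun ω => X ω = x ∧ E ω) ≤ ⨆ x, pr p (fun ω => X ω = x ∧ E ω) :=
  le_ciSup (f := fun x => pr p (fun ω => X ω = x ∧ E ω)) (Set.finite_range _).bddAbove x

theorem iSup_pr_comp_of_injective [Finite α] [Finite β] (hp : ∀ ω, 0 ≤ p ω) (X : Ω → α)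
    (E : Ω → Prop) {f : α → β} (hf : Function.Injective f) :
    ⨆ y, pr p (fun ω => f (X ω) = y ∧ E ω) = ⨆ x, pr p (fun ω => X ω = x ∧ E ω) := by
  have h_image (x : α) :
      pr p (fun ω => f (X ω) = f x ∧ E ω) = pr p (fun ω => X ω = x ∧ E ω) := by
    simp only [hf.eq_iff]
  have h_nonneg : 0 ≤ ⨆ x, pr p (fun ω => X ω = x ∧ E ω) :=
    Real.iSup_nonneg fun x => pr_nonneg hp _
  apply le_antisymm
  · refine Real.iSup_le (fun y => ?_) h_nonneg
    by_cases hy : y ∈ Set.range f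
    · obtain ⟨x, rfl⟩ := hy
      rw [h_image]
      exact pr_eq_and_le_iSup p X E x
    · rw [pr_eq_zero_of_forall_not fun ω h => hy ⟨X ω, h.1⟩]
      exact h_nonneg
  · refine Real.iSup_le (fun x => ?_) (Real.iSup_nonneg fun y => pr_nonneg hp _)
    rw [← h_image]
    exact pr_eq_and_le_iSup p (fun ω => f (X ω)) E (f x)

end Probability

section MinEntropy

variable {Ω α β : Type*} [Fintype Ω] [Fintype α] [Fintype β] {p : Ω → ℝ}

theorem minEntropy_comp_of_injective (hp : ∀ ω, 0 ≤ p ω) (X : Ω → α) {f : α → β}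
    (hf : Function.Injective f) : minEntropy p (fun ω => f (X ω)) = minEntropy p X := by
  simpa only [minEntropy, and_true] using
    congrArg (fun s => -Real.logb 2 s) (iSup_pr_comp_of_injective hp X (fun _ => True) hf)

theorem minEntropy_of_uniform [Nonempty α] {X : Ω → α}
    (hX : ∀ x, pr p (fun ω => X ω = x) = 1 / (Fintype.card α : ℝ)) :
    minEntropy p X = Real.logb 2 (Fintype.card α) := by
  simp only [minEntropy, hX, ciSup_const, one_div, Real.logb_inv, neg_neg]

end MinEntropy

section GuessingProbability

variable {Ω α β γ τ : Type*} [Fintype Ω] [Fintype β] [Fintype τ] {p : Ω → ℝ}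

/-- The guessing probability of `X` given `Z`: the probability that the best strategy observing `Z`
outputs the value of `X`. When positive, it equals `2 ^ (-H̃∞(X|Z))`; as in `condMinEntropy`, the
weight `Pr[Z = z]` is absorbed into the joint probability. -/
noncomputable def guessProb (p : Ω → ℝ) (X : Ω → α) (Z : Ω → β) : ℝ :=
  ∑ z, ⨆ x, pr p (fun ω => X ω = x ∧ Z ω = z)

theorem guessProb_nonneg (hp : ∀ ω, 0 ≤ p ω) (X : Ω → α) (Z : Ω → β) : 0 ≤ guessProb p X Z :=
  Finset.sum_nonneg fun _ _ => Real.iSup_nonneg fun _ => pr_nonneg hp _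

theorem guessProb_comp_of_injective [Finite α] [Finite γ] (hp : ∀ ω, 0 ≤ p ω) (X : Ω → α)
    (Z : Ω → β) {f : α → γ} (hf : Function.Injective f) :
    guessProb p (fun ω => f (X ω)) Z = guessProb p X Z :=
  Finset.sum_congr rfl fun z _ => iSup_pr_comp_of_injective hp X (fun ω => Z ω = z) hf

theorem guessProb_prodMk_of_indep (hp : ∀ ω, 0 ≤ p ω) (hp_sum : ∑ ω, p ω = 1)
    {X : Ω → α} {Z : Ω → β} {W : Ω → τ}
    (h_indep : ∀ x z w, pr p (fun ω => (X ω = x ∧ Z ω = z) ∧ W ω = w)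
      = pr p (fun ω => X ω = x ∧ Z ω = z) * pr p (fun ω => W ω = w)) :
    guessProb p X (fun ω => (Z ω, W ω)) = guessProb p X Z := by
  have h_view (z : β) (w : τ) : ⨆ x, pr p (fun ω => X ω = x ∧ (Z ω, W ω) = (z, w))
      = (⨆ x, pr p (fun ω => X ω = x ∧ Z ω = z)) * pr p (fun ω => W ω = w) := by
    simp only [Prod.mk.injEq, ← and_assoc, h_indep, Real.iSup_mul_of_nonneg (pr_nonneg hp _)]
  unfold guessProb
  simp only [Fintype.sum_prod_type, h_view, ← Finset.mul_sum, sum_pr_eq, hp_sum, mul_one]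

theorem pr_le_mul_guessProb [Fintype α] (hp : ∀ ω, 0 ≤ p ω) (X : Ω → α) (Z : Ω → β)
    {E : β → α → Prop} [∀ z, DecidablePred (E z)] {N : ℝ}
    (hE : ∀ z, ((Finset.univ.filter (E z)).card : ℝ) ≤ N) :
    pr p (fun ω => E (Z ω) (X ω)) ≤ N * guessProb p X Z := by
  calc pr p (fun ω => E (Z ω) (X ω))
      = ∑ z, ∑ x with E z x, pr p (fun ω => X ω = x ∧ Z ω = z) := by
        rw [pr_comp_eq_sum p (fun ω => (Z ω, X ω)) (fun y => E y.1 y.2)]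
        simp only [Finset.sum_filter, Fintype.sum_prod_type, Prod.mk.injEq, and_comm]
    _ ≤ ∑ z, N * ⨆ x, pr p (fun ω => X ω = x ∧ Z ω = z) := by
        refine Finset.sum_le_sum fun z _ => ?_
        refine (Finset.sum_le_card_nsmul _ _ _ fun x _ =>
          pr_eq_and_le_iSup p X (fun ω => Z ω = z) x).trans ?_
        rw [nsmul_eq_mul]
        exact mul_le_mul_of_nonneg_right (hE z) (Real.iSup_nonneg fun x => pr_nonneg hp _)
    _ = N * guessProb p X Z := (Finset.mul_sum _ _ _).symm

theorem guessProb_le_two_rpow_neg [Fintype α] (hp : ∀ ω, 0 ≤ p ω) {X : Ω → α} {Z : Ω → β} {t : ℝ}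
    (ht : t ≤ condMinEntropy p X Z) : guessProb p X Z ≤ 2 ^ (-t) := by
  rcases (guessProb_nonneg hp X Z).eq_or_lt with h_zero | h_pos
  · rw [← h_zero]
    positivity
  · exact (Real.logb_le_iff_le_rpow one_lt_two h_pos).mp (le_neg_of_le_neg ht)

end GuessingProbability

theorem two_rpow_neg_logb_sub_mul_logb {N q : ℝ} (hN : 0 < N) (hq : 0 < q) (s : ℝ) :
    (2 : ℝ) ^ (-(Real.logb 2 N - s * Real.logb 2 q)) = q ^ s / N := by
  rw [neg_sub, Real.rpow_sub two_pos, mul_comm, Real.rpow_mul two_pos.le,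
    Real.rpow_logb two_pos (by norm_num) hq, Real.rpow_logb two_pos (by norm_num) hN]

theorem stmt4_general {Msg Rnd C : Type*} [Fintype Rnd] [Fintype C] [Add C] {n q : ℕ} (hq : 0 < q)
    {δ : ℝ} (ρ : ℝ) {Enc : Msg × Rnd → C} {Dec : C → Option Msg}
    (h_inj : ∀ m, Function.Injective fun r => Enc (m, r))
    (h_offset : ∀ (m : Msg) (a : C),
      ((Finset.univ.filter (fun r : Rnd =>
          Dec (Enc (m, r) + a) ∉ ({some m, none} : Set (Option Msg)))).card : ℝ)
        / (Fintype.card Rnd : ℝ) ≤ δ) :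
    IsStrongAMD Enc Dec n q ρ ((q : ℝ) ^ (ρ * n) * δ) := by
  intro m Ω _ p hp hp_sum R hR ZS _ Z T _ W h_indep h_ent A
  obtain ⟨ω₀⟩ : Nonempty Ω := by
    by_contra! h_empty
    simp at hp_sum
  have : Nonempty Rnd := ⟨R ω₀⟩
  have h_card : (0 : ℝ) < Fintype.card Rnd := mod_cast Fintype.card_pos
  have hδ : 0 ≤ δ := (by positivity : (0 : ℝ) ≤ _).trans (h_offset m (Enc (m, R ω₀)))
  rw [minEntropy_comp_of_injective hp R (h_inj m), minEntropy_of_uniform hR] at h_ent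
  have h_guess : guessProb p R (fun ω => (Z ω, W ω)) ≤ (q : ℝ) ^ (ρ * n) / Fintype.card Rnd := by
    rw [guessProb_prodMk_of_indep hp hp_sum h_indep,
      ← guessProb_comp_of_injective hp R Z (h_inj m),
      ← two_rpow_neg_logb_sub_mul_logb h_card (Nat.cast_pos.mpr hq)]
    exact guessProb_le_two_rpow_neg hp h_ent
  calc pr p (fun ω => Dec (Enc (m, R ω) + A (Z ω) (W ω)) ∉ ({some m, none} : Set (Option Msg)))
      ≤ δ * Fintype.card Rnd * guessProb p R (fun ω => (Z ω, W ω)) :=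
        pr_le_mul_guessProb hp R (fun ω => (Z ω, W ω))
          (E := fun v r => Dec (Enc (m, r) + A v.1 v.2) ∉ ({some m, none} : Set (Option Msg)))
          fun v => (div_le_iff₀ h_card).mp (h_offset m (A v.1 v.2))
    _ ≤ δ * Fintype.card Rnd * ((q : ℝ) ^ (ρ * n) / Fintype.card Rnd) := by gcongr
    _ = (q : ℝ) ^ (ρ * n) * δ := by field_simp

/-- every regular coding scheme that is a strong `(0, δ)`-AMD code
(equivalently: every fixed offset succeeds with probability at most `δ` over uniform
randomness) is also a strong `(ρ, q^{ρn}·δ)`-AMD code. -/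
theorem stmt4 {F : Type*} [Field F] [Fintype F] (k σn n : ℕ)
    (δ ρ : ℝ) (hδ : 0 < δ) (hρ0 : 0 < ρ) (hρ1 : ρ < 1)
    (Enc : (Fin k → F) × (Fin σn → F) → (Fin n → F))
    (Dec : (Fin n → F) → Option (Fin k → F))
    (hcode : ∀ m r, Dec (Enc (m, r)) = some m)
    (hreg : Function.Injective Enc)
    (h0 : ∀ (m : Fin k → F) (a : Fin n → F),
      ((Finset.univ.filter (fun r : Fin σn → F =>
          Dec (Enc (m, r) + a) ∉ ({some m, none} : Set (Option (Fin k → F))))).card : ℝ)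
        / (Fintype.card F : ℝ) ^ σn ≤ δ) :
    IsStrongAMD Enc Dec n (Fintype.card F)
      ρ ((Fintype.card F : ℝ) ^ (ρ * n) * δ) :=
  stmt4_general Fintype.card_pos ρ (fun m => hreg.comp (Prod.mk_right_injective m)) fun m a => by
    simpa using h0 m a
end

section
/- Let F be a finite field, let k be a positive integer with (k+2)·1_F ≠ 0 in F, let m ∈ F^k, α ∈ F^k with α ≠ 0, and β, γ ∈ F. Define f(m,a) = a^{k+2} + Σ_{i=1}^k m_i a^i. Then the polynomial P(X) = f(m,X) + γ − f(m+α, X+β) = X^{k+2} + Σ_{i=1}^k m_i X^i + γ − (X+β)^{k+2} − Σ_{i=1}^k (m_i+α_i)(X+β)^i is a nonzero polynomial in F[X] of degree at most k+1. -/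
open Polynomial

/-!
In `f(m,X) + γ - f(m+α,X+β)` the leading terms cancel, and since `f` has no term of degree `k + 1`
the coefficient of `X^(k+1)` is `-(k+2)β`. If the difference vanishes, then `β = 0`, and comparing
the coefficients of `f(m,X) + γ` and `f(m+α,X)` in degrees `1, …, k` gives `α = 0`.
-/

section Taylor

variable {R : Type*} {n : ℕ}

theorem coeff_taylor_of_natDegree_le [Semiring R] {p : R[X]} (hp : p.natDegree ≤ n) (r : R) :
    (taylor r p).coeff n = p.coeff n := by
  obtain rfl | hlt := hp.eq_or_lt
  · exact coeff_taylor_natDegree r p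
  · rw [coeff_eq_zero_of_natDegree_lt hlt,
      coeff_eq_zero_of_natDegree_lt (by rwa [natDegree_taylor])]

theorem coeff_taylor_of_natDegree_le_succ [Semiring R] {p : R[X]} (hp : p.natDegree ≤ n + 1)
    (r : R) : (taylor r p).coeff n = (n + 1 : ℕ) * p.coeff (n + 1) * r + p.coeff n := by
  have hlin : (hasseDeriv n p).natDegree ≤ 1 := (natDegree_hasseDeriv_le p n).trans (by lia)
  rw [taylor_coeff, eq_X_add_C_of_natDegree_le_one hlin]
  simp only [eval_add, eval_C_mul, eval_X, eval_C, hasseDeriv_coeff, add_comm 1 n, zero_add,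
    Nat.choose_succ_self_right, Nat.choose_self, Nat.cast_one, one_mul]

theorem natDegree_sub_taylor_le [Ring R] {p q : R[X]} (hp : p.natDegree ≤ n + 1)
    (hq : q.natDegree ≤ n + 1) (hpq : p.coeff (n + 1) = q.coeff (n + 1)) (r : R) :
    (p - taylor r q).natDegree ≤ n := by
  refine natDegree_le_iff_coeff_eq_zero.mpr fun N hN ↦ ?_
  rw [coeff_sub, coeff_taylor_of_natDegree_le (hq.trans hN), sub_eq_zero]
  obtain rfl | hlt := (Nat.succ_le_of_lt hN).eq_or_lt
  · exact hpq
  · rw [coeff_eq_zero_of_natDegree_lt (hp.trans_lt hlt),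
      coeff_eq_zero_of_natDegree_lt (hq.trans_lt hlt)]

end Taylor

/-- The polynomial `f(m,X) = X^(k+2) + m_1 X + ⋯ + m_k X^k` attached to the vector `m`. Indices of
`m` start at `0` here, so the entry `m i` is the coefficient of `X^(i+1)`; the
shifted polynomial `f(m,X+β)` is `taylor β (tagPoly m)`. -/
noncomputable def tagPoly {R : Type*} [Semiring R] {k : ℕ} (m : Fin k → R) : R[X] :=
  X ^ (k + 2) + ∑ i : Fin k, C (m i) * X ^ ((i : ℕ) + 1)

namespace tagPoly

variable {R : Type*} [Semiring R] {k : ℕ} (m : Fin k → R)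

theorem natDegree_le : (tagPoly m).natDegree ≤ k + 2 := by
  refine natDegree_add_le_of_degree_le (natDegree_X_pow_le _) ?_
  exact natDegree_sum_le_of_forall_le _ _ fun i _ ↦ (natDegree_C_mul_X_pow_le _ _).trans (by lia)

theorem coeff_of_lt {j : ℕ} (hj : k < j) : (tagPoly m).coeff j = if j = k + 2 then 1 else 0 := by
  have hlow : ∀ i : Fin k, j ≠ i + 1 := fun i ↦ by lia
  simp [tagPoly, coeff_X_pow, hlow]

theorem coeff_val_add_one (i : Fin k) : (tagPoly m).coeff (i + 1) = m i := by
  have htop : (i : ℕ) ≠ k + 1 := by lia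
  simp [tagPoly, coeff_X_pow, htop, Fin.val_inj]

variable {m} in
theorem eq_of_add_C_eq_taylor (hk : IsLeftRegular ((k + 2 : ℕ) : R)) {m' : Fin k → R} {β γ : R}
    (h : tagPoly m + C γ = taylor β (tagPoly m')) : m = m' := by
  have hmul : ((k + 2 : ℕ) : R) * β = 0 := by
    simpa [coeff_taylor_of_natDegree_le_succ (natDegree_le m'), coeff_of_lt, coeff_C_succ,
      add_assoc, one_add_one_eq_two] using (congrArg (coeff · (k + 1)) h).symm
  have hβ : β = 0 := hk (hmul.trans (mul_zero _).symm)
  rw [hβ, taylor_zero] at h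
  funext i
  simpa [coeff_val_add_one] using congrArg (coeff · (i + 1)) h

end tagPoly

theorem stmt6_general {R : Type*} [Ring R] {k : ℕ} (hk : IsLeftRegular ((k + 2 : ℕ) : R))
    (m : Fin k → R) {α : Fin k → R} (hα : α ≠ 0) (β γ : R) :
    tagPoly m + C γ - taylor β (tagPoly (m + α)) ≠ 0 ∧
      (tagPoly m + C γ - taylor β (tagPoly (m + α))).natDegree ≤ k + 1 := by
  constructor
  · intro h
    have hm : m = m + α := tagPoly.eq_of_add_C_eq_taylor hk (sub_eq_zero.mp h)
    exact hα (left_eq_add.mp hm)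
  · have hdeg : (tagPoly m + C γ).natDegree ≤ k + 2 := by
      simpa only [natDegree_add_C] using tagPoly.natDegree_le m
    refine natDegree_sub_taylor_le hdeg (tagPoly.natDegree_le _) ?_ β
    simp [tagPoly.coeff_of_lt, coeff_C_succ]

/-- with `f(m,a) = a^{k+2} + Σ_{i=1}^k m_i a^i`, for `α ≠ 0` the polynomial
`P(X) = f(m,X) + γ − f(m+α, X+β)` is a nonzero polynomial of degree at most `k+1`. -/
theorem stmt6 {F : Type*} [Field F] [Fintype F] (k : ℕ) (hk : 0 < k)
    (hchar : ((k + 2 : ℕ) : F) ≠ 0)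
    (m α : Fin k → F) (hα : α ≠ 0) (β γ : F) :
    (X ^ (k + 2) + ∑ i : Fin k, C (m i) * X ^ ((i : ℕ) + 1) + C γ
        - ((X + C β) ^ (k + 2)
          + ∑ i : Fin k, C (m i + α i) * (X + C β) ^ ((i : ℕ) + 1))
      : Polynomial F) ≠ 0 ∧
    (X ^ (k + 2) + ∑ i : Fin k, C (m i) * X ^ ((i : ℕ) + 1) + C γ
        - ((X + C β) ^ (k + 2)
          + ∑ i : Fin k, C (m i + α i) * (X + C β) ^ ((i : ℕ) + 1))
      : Polynomial F).natDegree ≤ k + 1 := by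
  simpa [tagPoly, taylor_apply] using stmt6_general (IsRegular.of_ne_zero hchar).left m hα β γ
end

section
/- Let F be a finite field with q elements, let k be a positive integer with (k+2)·1_F ≠ 0 in F, let m ∈ F^k, α ∈ F^k with α ≠ 0, and β, γ ∈ F. Define f(m,a) = a^{k+2} + Σ_{i=1}^k m_i a^i. Then the set {x ∈ F : f(m+α, x+β) = f(m,x) + γ} has cardinality at most k+1. -/
open scoped Classical BigOperators

/-!
Both sides of `f(m + α, x + β) = f(m, x) + γ` are monic polynomials in `x` of degree `k + 2`, so
there are at most `k + 1` solutions unless they agree as polynomials. Translation by `β` adds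
`(k + 2) * β` to the coefficient of degree `k + 1`, which vanishes in `f(m, x)`; agreement therefore
forces `β = 0`, and then `α = 0` by comparing the remaining coefficients.
-/

section Translation

open Polynomial

theorem nextCoeff_taylor {R : Type*} [Semiring R] (f : R[X]) (r : R) :
    (taylor r f).nextCoeff = f.nextCoeff + f.natDegree * f.leadingCoeff * r := by
  rcases hd : f.natDegree with _ | n
  · simp [nextCoeff, hd]
  have hasseDeriv_natDegree_lt : (hasseDeriv n f).natDegree < 2 :=
    (natDegree_hasseDeriv_le f n).trans_lt (by omega)
  rw [nextCoeff_of_natDegree_pos (by simp [hd]), nextCoeff_of_natDegree_pos (by simp [hd]),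
    natDegree_taylor, hd, Nat.add_sub_cancel, taylor_coeff,
    eval_eq_sum_range' hasseDeriv_natDegree_lt]
  simp [Finset.sum_range_succ, hasseDeriv_coeff, leadingCoeff, hd, add_comm 1 n]

theorem taylor_ne_of_nextCoeff_eq {R : Type*} [Ring R] [NoZeroDivisors R] {f g : R[X]}
    (hnext : f.nextCoeff = g.nextCoeff) (hchar : (f.natDegree : R) ≠ 0) (hfg : f ≠ g) (r : R) :
    taylor r f ≠ g := by
  rintro rfl
  have hlead : f.leadingCoeff ≠ 0 := leadingCoeff_ne_zero.2 <| by
    rintro rfl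
    simp at hchar
  have hr : r = 0 := by simpa [nextCoeff_taylor, hchar, hlead] using hnext
  exact hfg (by rw [hr, taylor_zero])

variable {R : Type*} [CommRing R] [IsDomain R] {f g : R[X]}

theorem encard_setOf_eval_eq_le (hfg : f ≠ g) :
    {x | f.eval x = g.eval x}.encard ≤ (f - g).natDegree := by
  have hroots : {x | f.eval x = g.eval x} = ((f - g).roots.toFinset : Set R) := by
    ext x
    simp [sub_ne_zero.2 hfg, sub_eq_zero]
  rw [hroots, Set.encard_coe_eq_coe_finsetCard, Nat.cast_le]
  exact (Multiset.toFinset_card_le _).trans (card_roots' _)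

theorem encard_setOf_eval_add_eq_lt (hdeg : f.natDegree = g.natDegree)
    (hlead : f.leadingCoeff = g.leadingCoeff) (hnext : f.nextCoeff = g.nextCoeff)
    (hchar : (f.natDegree : R) ≠ 0) (hfg : f ≠ g) (r : R) :
    {x | f.eval (x + r) = g.eval x}.encard < f.natDegree := by
  have hne : taylor r f ≠ g := taylor_ne_of_nextCoeff_eq hnext hchar hfg r
  have hf : f ≠ 0 := by
    rintro rfl
    simp at hchar
  have hg : g ≠ 0 := by rwa [← leadingCoeff_ne_zero, ← hlead, leadingCoeff_ne_zero]
  have hsub : (taylor r f - g).natDegree < f.natDegree := by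
    rw [natDegree_lt_iff_degree_lt (sub_ne_zero.2 hne), ← degree_eq_natDegree hf,
      ← degree_taylor f r]
    have hdegree : (taylor r f).degree = g.degree := by
      rw [degree_taylor, degree_eq_natDegree hf, degree_eq_natDegree hg, hdeg]
    exact degree_sub_lt_left hdegree ((taylor_eq_zero r f).not.2 hf)
      (by rw [leadingCoeff_taylor, hlead])
  simp_rw [← taylor_eval]
  exact (encard_setOf_eval_eq_le hne).trans_lt (Nat.cast_lt.2 hsub)

end Translation

section Depressed

open Polynomial

/-- The depressed monic polynomial `X ^ (n + 1) + ∑ i < n, c i * X ^ i`, that is, the monic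
polynomial of degree `n + 1` with lower coefficients `c` and no term of degree `n`. For `n = k + 1`
and `c = (γ, m_1, …, m_k)` it is `f(m, X) + γ`. -/
noncomputable def depressedPolynomial {R : Type*} [Semiring R] {n : ℕ} (c : Fin n → R) : R[X] :=
  X ^ (n + 1) + ofFn n c

namespace depressedPolynomial

section Semiring

variable {R : Type*} [Semiring R] {n : ℕ}

theorem eval_eq (c : Fin n → R) (x : R) :
    (depressedPolynomial c).eval x = x ^ (n + 1) + ∑ i, c i * x ^ (i : ℕ) := by
  simp [depressedPolynomial, ofFn_eq_sum_monomial, eval_X_pow, eval_finsetSum]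

theorem isMonicOfDegree [Nontrivial R] (c : Fin n → R) :
    IsMonicOfDegree (depressedPolynomial c) (n + 1) :=
  (isMonicOfDegree_X_pow R (n + 1)).add_right <|
    Nat.lt_succ_of_le (natDegree_le_of_degree_le (ofFn_degree_lt c).le)

theorem nextCoeff_eq_zero [Nontrivial R] (c : Fin n → R) :
    (depressedPolynomial c).nextCoeff = 0 := by
  rw [nextCoeff_of_natDegree_pos (by simp [(isMonicOfDegree c).natDegree_eq]),
    (isMonicOfDegree c).natDegree_eq]
  simp [depressedPolynomial, coeff_X_pow]

theorem injective : Function.Injective (depressedPolynomial : (Fin n → R) → R[X]) :=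
  Function.LeftInverse.injective (g := toFn n) fun c ↦ by
    have toFn_X_pow : toFn n (X ^ (n + 1) : R[X]) = 0 := by
      ext i
      simp [toFn, coeff_X_pow, (i.isLt.trans n.lt_succ_self).ne]
    rw [depressedPolynomial, map_add, toFn_X_pow, zero_add]
    exact toFn_comp_ofFn_eq_id n c

end Semiring

theorem encard_setOf_eval_add_eq_le {R : Type*} [CommRing R] [IsDomain R] {n : ℕ}
    (hn : ((n + 1 : ℕ) : R) ≠ 0) {c d : Fin n → R} (hcd : c ≠ d) (r : R) :
    {x | (depressedPolynomial c).eval (x + r) = (depressedPolynomial d).eval x}.encard ≤ n := by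
  have hc := isMonicOfDegree c
  have hd := isMonicOfDegree d
  have hlt := encard_setOf_eval_add_eq_lt
    (hc.natDegree_eq.trans hd.natDegree_eq.symm)
    (hc.leadingCoeff_eq.trans hd.leadingCoeff_eq.symm)
    ((nextCoeff_eq_zero c).trans (nextCoeff_eq_zero d).symm)
    (by rwa [hc.natDegree_eq]) (injective.ne hcd) r
  rw [hc.natDegree_eq, Nat.cast_succ] at hlt
  exact Order.le_of_lt_add_one hlt

end depressedPolynomial

end Depressed

theorem stmt7_general {R : Type*} [CommRing R] [IsDomain R] (k : ℕ)
    (hchar : ((k + 2 : ℕ) : R) ≠ 0) (m α : Fin k → R) (hα : α ≠ 0) (β γ : R) :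
    {x : R | (x + β) ^ (k + 2) + ∑ i : Fin k, (m i + α i) * (x + β) ^ ((i : ℕ) + 1)
      = x ^ (k + 2) + ∑ i : Fin k, m i * x ^ ((i : ℕ) + 1) + γ}.encard ≤ (k + 1 : ℕ) := by
  have hne : (Fin.cons 0 (m + α) : Fin (k + 1) → R) ≠ Fin.cons γ m := fun h ↦
    hα (add_eq_left.1 (Fin.cons_injective2 h).2)
  simpa [depressedPolynomial.eval_eq, Fin.sum_univ_succ, add_assoc, add_comm γ] using
    depressedPolynomial.encard_setOf_eval_add_eq_le hchar hne β

/-- with `f(m,a) = a^{k+2} + Σ_{i=1}^k m_i a^i`, for `α ≠ 0` the set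
`{x ∈ F : f(m+α, x+β) = f(m,x) + γ}` has cardinality at most `k+1`. -/
theorem stmt7 {F : Type*} [Field F] [Fintype F] (k : ℕ) (hk : 0 < k)
    (hchar : ((k + 2 : ℕ) : F) ≠ 0)
    (m α : Fin k → F) (hα : α ≠ 0) (β γ : F) :
    (Finset.univ.filter (fun x : F =>
        (x + β) ^ (k + 2) + ∑ i : Fin k, (m i + α i) * (x + β) ^ ((i : ℕ) + 1)
          = x ^ (k + 2) + ∑ i : Fin k, m i * x ^ ((i : ℕ) + 1) + γ)).card ≤ k + 1 := by
  rw [← Nat.cast_le (α := ℕ∞), ← Set.encard_coe_eq_coe_finsetCard, Finset.coe_filter_univ]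
  exact stmt7_general k hchar m α hα β γ
end

section
/- Let F be a finite field with q elements of characteristic greater than 2 and let k be a positive integer. Define g(m) = Σ_{j=1}^k m_j², Enc(m) = (m, g(m)) ∈ F^{k+1}, and Dec(m', y) = m' if y = g(m') and ⊥ otherwise. Then (Enc, Dec) is a weak (0, 1/q)-AMD code: for every (α, β) ∈ F^k × F and M uniform on F^k, Pr[Dec(Enc(M) + (α,β)) ∉ {M, ⊥}] ≤ 1/q. Moreover, for α ≠ 0 the probability Pr[Dec(Enc(M) + (α,β)) ≠ ⊥] equals exactly 1/q. -/
open scoped Classical BigOperators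

/-!
A tampered codeword `(m + α, g m + β)` is accepted exactly when `g (m + α) - g m = β`, and for
`α = 0` acceptance returns the original message. Hence tampering succeeds with probability at most
`1 / |H|`, where `H` is the group of tags, as soon as every difference `m ↦ g (m + α) - g m` with
`α ≠ 0` is equidistributed. For a quadratic map `g` this difference is, up to a constant, the
additive map `m ↦ polar g α m`, so it is equidistributed whenever it is surjective. For a sum of
squares the polar form is twice the dot product, which is where the characteristic enters.
-/

open Finset Function QuadraticMap

/-- Perfect nonlinear functions between finite groups: every difference `x ↦ g (x + α) - g x` with
`α ≠ 0` takes each value equally often. The common fibre size `|G| / |H|` is encoded without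
division. -/
def IsPerfectNonlinear {G H : Type*} [AddGroup G] [AddGroup H] [Fintype G] [Fintype H]
    (g : G → H) : Prop :=
  ∀ α : G, α ≠ 0 → ∀ b : H, #{x | g (x + α) - g x = b} * Fintype.card H = Fintype.card G

theorem card_fiber_mul_card_of_surjective {G H : Type*} [AddGroup G] [AddMonoid H] [Fintype G]
    [Fintype H] {f : G →+ H} (hf : Surjective f) (b : H) :
    #{x | f x = b} * Fintype.card H = Fintype.card G :=
  calc #{x | f x = b} * Fintype.card H = ∑ _c : H, #{x | f x = b} := by
        rw [sum_const, card_univ, smul_eq_mul, mul_comm]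
    _ = ∑ c : H, #{x | f x = c} :=
        sum_congr rfl fun c _ => AddMonoidHom.card_fiber_eq_of_mem_range f (hf b) (hf c)
    _ = Fintype.card G := (card_eq_sum_card_fiberwise fun _ _ => mem_univ _).symm

theorem isPerfectNonlinear_of_surjective_polarBilin {R M N : Type*} [CommRing R]
    [AddCommGroup M] [AddCommGroup N] [Module R M] [Module R N] [Fintype M] [Fintype N]
    (Q : QuadraticMap R M N) (hQ : ∀ α, α ≠ 0 → Surjective (Q.polarBilin α)) :
    IsPerfectNonlinear Q := by
  intro α hα b
  have difference_eq_iff (x : M) : Q (x + α) - Q x = b ↔ Q.polarBilin α x = b - Q α := by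
    rw [polarBilin_apply_apply, polar, add_comm α x, sub_right_comm, sub_left_inj]
  simp only [difference_eq_iff]
  exact card_fiber_mul_card_of_surjective (f := (Q.polarBilin α).toAddMonoidHom) (hQ α hα) _

theorem isPerfectNonlinear_sum_sq {F ι : Type*} [Field F] [Fintype F] [Fintype ι]
    [DecidableEq ι] (h2 : (2 : F) ≠ 0) : IsPerfectNonlinear fun m : ι → F => ∑ j, m j ^ 2 := by
  let Q : QuadraticForm F (ι → F) := LinearMap.BilinMap.toQuadraticMap (dotProductBilin F F)
  have hQ : ⇑Q = fun m => ∑ j, m j ^ 2 := by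
    funext m
    exact sum_congr rfl fun j _ => (pow_two (m j)).symm
  have polar_eq (α m : ι → F) : Q.polarBilin α m = 2 * (α ⬝ᵥ m) := by
    rw [LinearMap.BilinMap.polarBilin_toQuadraticMap]
    simp [dotProduct_comm m α, two_mul]
  rw [← hQ]
  refine isPerfectNonlinear_of_surjective_polarBilin Q fun α hα =>
    LinearMap.surjective fun h => hα (dotProduct_eq_zero α fun m => ?_)
  simpa [polar_eq, h2] using LinearMap.congr_fun h m

section SystematicCode

variable {G H : Type*}

/-- The systematic encoder attached to a tag function `g`: a message followed by its tag. -/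
def systematicEnc (g : G → H) (m : G) : G × H := (m, g m)

/-- The decoder of the systematic code with tag function `g`: it returns the message part of a word
whose tag is correct, and `none`, standing for `⊥`, otherwise. -/
noncomputable def systematicDec (g : G → H) (c : G × H) : Option G :=
  if c.2 = g c.1 then some c.1 else none

theorem systematicDec_systematicEnc (g : G → H) (m : G) :
    systematicDec g (systematicEnc g m) = some m :=
  if_pos rfl

theorem systematicDec_add_zero_mem [AddZeroClass G] [Add H] (g : G → H) (m : G) (β : H) :
    systematicDec g (systematicEnc g m + (0, β)) ∈ ({some m, none} : Set (Option G)) := by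
  simp only [systematicDec, systematicEnc, Prod.mk_add_mk, add_zero]
  split_ifs <;> simp

theorem systematicDec_add_ne_none_iff [Add G] [AddCommGroup H] {g : G → H} {m α : G} {β : H} :
    systematicDec g (systematicEnc g m + (α, β)) ≠ none ↔ g (m + α) - g m = β := by
  simp [systematicDec, systematicEnc, sub_eq_iff_eq_add', @eq_comm _ (g m + β)]

variable [AddGroup G] [AddCommGroup H] [Fintype G] [Fintype H] {g : G → H}

theorem IsPerfectNonlinear.prob_undetected_eq (hg : IsPerfectNonlinear g) {α : G} (hα : α ≠ 0)
    (β : H) :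
    (#{m | systematicDec g (systematicEnc g m + (α, β)) ≠ none} : ℝ) / Fintype.card G =
      1 / Fintype.card H := by
  have hG : (Fintype.card G : ℝ) ≠ 0 := Nat.cast_ne_zero.mpr Fintype.card_ne_zero
  have hH : (Fintype.card H : ℝ) ≠ 0 := Nat.cast_ne_zero.mpr Fintype.card_ne_zero
  simp only [systematicDec_add_ne_none_iff]
  rw [div_eq_div_iff hG hH, one_mul]
  exact_mod_cast hg α hα β

theorem IsPerfectNonlinear.prob_misdecoded_le [DecidableEq G] (hg : IsPerfectNonlinear g)
    (α : G) (β : H) :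
    (#{m | systematicDec g (systematicEnc g m + (α, β)) ∉ ({some m, none} : Set (Option G))} : ℝ) /
      Fintype.card G ≤ 1 / Fintype.card H := by
  obtain rfl | hα := eq_or_ne α 0
  · simp only [systematicDec_add_zero_mem, not_true, filter_false, card_empty, Nat.cast_zero,
      zero_div]
    positivity
  · rw [← hg.prob_undetected_eq hα β]
    gcongr with m
    exact Or.inr

theorem stmt10_general [DecidableEq G] (hg : IsPerfectNonlinear g) :
    (∀ m, systematicDec g (systematicEnc g m) = some m) ∧
    (∀ (α : G) (β : H),
      (#{m | systematicDec g (systematicEnc g m + (α, β)) ∉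
          ({some m, none} : Set (Option G))} : ℝ) / Fintype.card G ≤ 1 / Fintype.card H) ∧
    (∀ (α : G) (β : H), α ≠ 0 →
      (#{m | systematicDec g (systematicEnc g m + (α, β)) ≠ none} : ℝ) / Fintype.card G =
        1 / Fintype.card H) :=
  ⟨systematicDec_systematicEnc g, hg.prob_misdecoded_le, fun _ β hα => hg.prob_undetected_eq hα β⟩

end SystematicCode

/-- over a finite field of characteristic `> 2`, the coding scheme
`Enc(m) = (m, Σ_j m_j²)` with the natural decoder is a weak `(0, 1/q)`-AMD code, and
for every offset `(α, β)` with `α ≠ 0` the probability (over a uniform message `M`)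
that `Dec(Enc(M) + (α,β)) ≠ ⊥` is exactly `1/q`. -/
theorem stmt10 {F : Type*} [Field F] [Fintype F] (hchar : 2 < ringChar F)
    (k : ℕ) (hk : 0 < k) :
    let g : (Fin k → F) → F := fun m => ∑ j : Fin k, (m j) ^ 2
    let Enc : (Fin k → F) → (Fin k → F) × F := fun m => (m, g m)
    let Dec : (Fin k → F) × F → Option (Fin k → F) :=
      fun c => if c.2 = g c.1 then some c.1 else none
    -- coding scheme
    (∀ m : Fin k → F, Dec (Enc m) = some m) ∧
    -- weak (0, 1/q)-AMD security: for every fixed offset, over a uniform message M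
    (∀ (α : Fin k → F) (β : F),
      ((Finset.univ.filter (fun M : Fin k → F =>
          Dec (Enc M + (α, β)) ∉ ({some M, none} : Set (Option (Fin k → F))))).card : ℝ)
        / (Fintype.card F : ℝ) ^ k ≤ 1 / (Fintype.card F : ℝ)) ∧
    -- moreover, for α ≠ 0 the probability of not detecting is exactly 1/q
    (∀ (α : Fin k → F) (β : F), α ≠ 0 →
      ((Finset.univ.filter (fun M : Fin k → F =>
          Dec (Enc M + (α, β)) ≠ none)).card : ℝ)
        / (Fintype.card F : ℝ) ^ k = 1 / (Fintype.card F : ℝ)) := by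
  rw [show (Fintype.card F : ℝ) ^ k = Fintype.card (Fin k → F) by simp]
  exact stmt10_general (isPerfectNonlinear_sum_sq (Ring.two_ne_zero hchar.ne'))
end
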